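/- Let ρ₀ satisfy the stated first-order equation with a < ρ₀ < b, normalized so that b·ln((ρ₀(0) − a)/(ρ₀(0) + a)) − a·ln((b − ρ₀(0))/(b + ρ₀(0))) = 0. Then for every z ∈ ℝ: b² − ρ₀(z)² = (b + ρ₀(z))² · ((ρ₀(z) − a)/(ρ₀(z) + a))^{b/a} · exp(−√2 b(b² − a²) z) and ρ₀(z)² − a² = (a + ρ₀(z))² · ((b − ρ₀(z))/(b + ρ₀(z)))^{a/b} · exp(√2 a(b² − a²) z). -/

import Mathlib

/-- If `ρ₀' = (√2/2)(ρ₀² − a²)(b² − ρ₀²)` with `a < ρ₀ < b`, normalized by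
`b ln((ρ₀(0) − a)/(ρ₀(0) + a)) − a ln((b − ρ₀(0))/(b + ρ₀(0))) = 0`, then for all `z`:
`b² − ρ₀² = (b + ρ₀)² ((ρ₀ − a)/(ρ₀ + a))^{b/a} e^{−√2 b(b² − a²) z}` and
`ρ₀² − a² = (a + ρ₀)² ((b − ρ₀)/(b + ρ₀))^{a/b} e^{√2 a(b² − a²) z}`. -/
theorem statement6 (a b : ℝ) (ha : 0 < a) (hab : a < b) (ρ₀ : ℝ → ℝ)
    (hreg : ContDiff ℝ 1 ρ₀)
    (hderiv : ∀ z, deriv ρ₀ z =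
      Real.sqrt 2 / 2 * ((ρ₀ z) ^ 2 - a ^ 2) * (b ^ 2 - (ρ₀ z) ^ 2))
    (hbnd : ∀ z, a < ρ₀ z ∧ ρ₀ z < b)
    (hnorm : b * Real.log ((ρ₀ 0 - a) / (ρ₀ 0 + a))
      - a * Real.log ((b - ρ₀ 0) / (b + ρ₀ 0)) = 0) :
    ∀ z : ℝ,
      b ^ 2 - (ρ₀ z) ^ 2 = (b + ρ₀ z) ^ 2 * ((ρ₀ z - a) / (ρ₀ z + a)) ^ (b / a)
        * Real.exp (-(Real.sqrt 2) * b * (b ^ 2 - a ^ 2) * z) ∧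
      (ρ₀ z) ^ 2 - a ^ 2 = (a + ρ₀ z) ^ 2 * ((b - ρ₀ z) / (b + ρ₀ z)) ^ (a / b)
        * Real.exp (Real.sqrt 2 * a * (b ^ 2 - a ^ 2) * z) := by
  have hd : ∀ z, HasDerivAt ρ₀
      (Real.sqrt 2 / 2 * ((ρ₀ z) ^ 2 - a ^ 2) * (b ^ 2 - (ρ₀ z) ^ 2)) z := by
    intro z
    rw [← hderiv z]
    exact ((hreg.differentiable (by norm_num)) z).hasDerivAt
  have hb : 0 < b := ha.trans hab
  have hF : ∀ z, HasDerivAt (fun z => b * (Real.log (ρ₀ z - a) - Real.log (ρ₀ z + a))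
      - a * (Real.log (b - ρ₀ z) - Real.log (b + ρ₀ z))
      - Real.sqrt 2 * a * b * (b ^ 2 - a ^ 2) * z) 0 z := by
    intro z
    obtain ⟨h1, h2⟩ := hbnd z
    have e1 : ρ₀ z - a ≠ 0 := by linarith
    have e2 : ρ₀ z + a ≠ 0 := by linarith
    have e3 : b - ρ₀ z ≠ 0 := by linarith
    have e4 : b + ρ₀ z ≠ 0 := by linarith
    have h := ((((((hd z).sub_const a).log e1).sub (((hd z).add_const a).log e2)).const_mul b).sub
      (((((hd z).const_sub b).log e3).sub (((hd z).const_add b).log e4)).const_mul a)).sub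
      ((hasDerivAt_id z).const_mul (Real.sqrt 2 * a * b * (b ^ 2 - a ^ 2)))
    refine h.congr_deriv ?_
    field_simp
    ring
  have hc := fun z => is_const_of_deriv_eq_zero (fun z => (hF z).differentiableAt)
    (fun z => (hF z).deriv) z 0
  intro z
  have hz := hc z
  obtain ⟨h1, h2⟩ := hbnd z
  obtain ⟨k1, k2⟩ := hbnd 0
  have p1 : 0 < ρ₀ z - a := by linarith
  have p2 : 0 < ρ₀ z + a := by linarith
  have p3 : 0 < b - ρ₀ z := by linarith
  have p4 : 0 < b + ρ₀ z := by linarith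
  rw [Real.log_div (by linarith) (by linarith), Real.log_div (by linarith) (by linarith)] at hnorm
  simp only [mul_zero, sub_zero] at hz
  rw [hnorm, ← Real.log_div p1.ne' p2.ne', ← Real.log_div p3.ne' p4.ne'] at hz
  have q1 := div_pos p1 p2
  have q2 := div_pos p3 p4
  constructor
  · have key : (b - ρ₀ z) / (b + ρ₀ z) = ((ρ₀ z - a) / (ρ₀ z + a)) ^ (b / a)
        * Real.exp (-(Real.sqrt 2) * b * (b ^ 2 - a ^ 2) * z) := by
      rw [Real.rpow_def_of_pos q1, ← Real.exp_add]
      conv_lhs => rw [← Real.exp_log q2]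
      congr 1
      generalize Real.log ((ρ₀ z - a) / (ρ₀ z + a)) = x at *
      generalize Real.log ((b - ρ₀ z) / (b + ρ₀ z)) = y at *
      field_simp
      linarith
    rw [mul_assoc, ← key]
    field_simp
    ring
  · have key : (ρ₀ z - a) / (ρ₀ z + a) = ((b - ρ₀ z) / (b + ρ₀ z)) ^ (a / b)
        * Real.exp (Real.sqrt 2 * a * (b ^ 2 - a ^ 2) * z) := by
      rw [Real.rpow_def_of_pos q2, ← Real.exp_add]
      conv_lhs => rw [← Real.exp_log q1]
      congr 1
      generalize Real.log ((ρ₀ z - a) / (ρ₀ z + a)) = x at *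
      generalize Real.log ((b - ρ₀ z) / (b + ρ₀ z)) = y at *
      field_simp
      linarith
    rw [mul_assoc, ← key]
    field_simp
    ring
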